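/- Let n be an even integer with n ≥ 6 and let f : F → 𝔽₂ be defined by f(x) = tr(x^{15}). Then nl₃(f) ≥ 2^{n−1} − (1/2)·√((2^n − 1)·√((1/3)·2^{3n/2 + 4} + (7/3)·2^{n+1} − (1/3)·2^{n/2 + 5}) + 2^n). -/

import Mathlib

noncomputable section

/-- `Fq n` is the finite field with `2 ^ n` elements. -/
abbrev Fq (n : ℕ) : Type := GaloisField 2 n

/-- The absolute trace map `tr x = x + x^2 + x^4 + ⋯ + x^(2^(n-1))` from `Fq n` to `𝔽₂`. -/
def tr {n : ℕ} (x : Fq n) : ZMod 2 := Algebra.trace (ZMod 2) (Fq n) x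

/-- The derivative of `f` with respect to `a`. -/
def der {n : ℕ} (f : Fq n → ZMod 2) (a : Fq n) : Fq n → ZMod 2 :=
  fun x => f x + f (x + a)

/-- Iterated derivatives along a list of directions (head applied last/outermost). -/
def derIter {n : ℕ} (f : Fq n → ZMod 2) : List (Fq n) → (Fq n → ZMod 2)
  | [] => f
  | a :: as => der (derIter f as) a

/-- `g` has algebraic degree at most `r`: all `(r+1)`-th order derivatives vanish. -/
def degLE {n : ℕ} (g : Fq n → ZMod 2) (r : ℕ) : Prop :=
  ∀ l : List (Fq n), l.length = r + 1 → derIter g l = fun _ => 0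

/-- Hamming distance between two Boolean functions on `Fq n`. -/
def hdist {n : ℕ} (f g : Fq n → ZMod 2) : ℕ :=
  {x : Fq n | f x ≠ g x}.ncard

/-- The `r`-th order nonlinearity of `f`. -/
def nl {n : ℕ} (r : ℕ) (f : Fq n → ZMod 2) : ℕ :=
  sInf {d : ℕ | ∃ g : Fq n → ZMod 2, degLE g r ∧ d = hdist f g}

/-- The linear kernel of `f`: directions along which the derivative is constant. -/
def linKer {n : ℕ} (f : Fq n → ZMod 2) : Set (Fq n) :=
  {b | ∃ c : ZMod 2, ∀ x, der f b x = c}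

/-- The weight of a Boolean function on `Fq n`. -/
def wt {n : ℕ} (f : Fq n → ZMod 2) : ℕ := {x : Fq n | f x = 1}.ncard

/-!
Write `W h` for the sum of `(-1) ^ h x`. Since `W h ^ 2 = ∑ a, W (D_a h)`, bounds on all
`W (D_b D_a h)` give a bound on `W h`. Let `h` differ from `tr (c * x ^ 15)` by a function of degree
at most 3. Its fourth derivative is `tr` of `c` times the Moore determinant of the four directions,
because `x ^ 15 = x * x ^ 2 * x ^ 4 * x ^ 8` is a product of additive maps. Hence `D_b D_a h` is
quadratic, and a partial factorization of the determinant places its radical in the kernel of a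
composite of additive maps with small fibres: for `b ∉ {0, a}` this has at most 64 elements, and at
most 16 when `c * a * (b ^ 2 + a * b)` is not a cube. As there are primitive cube roots of unity for
even `n`, about one third of the `b` give a cube; a cubic exponential sum bounds their number.
-/

section

open Finset Polynomial

local instance {n : ℕ} : Fintype (Fq n) := Fintype.ofFinite _

section Fibers

variable {α β γ K : Type*}

/-- Every fibre of `f` has at most `k` elements. For an additive `f` this bounds its kernel, and the
bounds multiply under composition. -/
def FibersCardLE [Fintype α] [DecidableEq β] (f : α → β) (k : ℕ) : Prop :=
  ∀ y, #{x | f x = y} ≤ k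

theorem FibersCardLE.comp [Fintype α] [Fintype β] [DecidableEq β] [DecidableEq γ]
    {g : β → γ} {f : α → β} {k l : ℕ} (hg : FibersCardLE g l) (hf : FibersCardLE f k) :
    FibersCardLE (g ∘ f) (k * l) := by
  intro z
  have hmaps : ∀ x ∈ ({x | (g ∘ f) x = z} : Finset α), f x ∈ ({y | g y = z} : Finset β) := by
    simp
  refine (card_le_mul_card_image_of_maps_to hmaps k fun y _ => ?_).trans
    (Nat.mul_le_mul_left k (hg z))
  exact (card_le_card (filter_subset_filter _ (filter_subset _ _))).trans (hf y)

theorem fibersCardLE_one_of_injective [Fintype α] [DecidableEq β] {f : α → β}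
    (hf : Function.Injective f) : FibersCardLE f 1 := by
  intro y
  refine card_le_one.mpr fun x hx x' hx' => hf ?_
  simp only [mem_filter, mem_univ, true_and] at hx hx'
  rw [hx, hx']

variable [Field K] [Fintype K] [DecidableEq K]

theorem fibersCardLE_of_eq_eval {f : K → K} {P : K[X]} {k : ℕ} (hf : ∀ x, f x = P.eval x)
    (hP : P.natDegree = k) (hk : 0 < k) : FibersCardLE f k := by
  intro y
  have hdeg : 0 < P.degree := natDegree_pos_iff_degree_pos.mp (hP ▸ hk)
  have hsub : ({x | f x = y} : Finset K) ⊆ (P - C y).roots.toFinset := by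
    intro x hx
    have hne : P - C y ≠ 0 := fun h => by
      rw [sub_eq_zero.mp h, natDegree_C] at hP
      omega
    simpa [hne, sub_eq_zero, hf] using hx
  calc #{x | f x = y} ≤ #(P - C y).roots.toFinset := card_le_card hsub
    _ ≤ Multiset.card (P - C y).roots := Multiset.toFinset_card_le _
    _ ≤ k := hP ▸ card_roots_sub_C' hdeg

theorem card_filter_pow_eq {ζ z y : K} {k : ℕ} [NeZero k] (hζ : IsPrimitiveRoot ζ k) (hz : z ≠ 0)
    (hy : y ^ k = z) : #{x : K | z = x ^ k} = k := by
  have heq : ({x | z = x ^ k} : Finset K) = (nthRoots k z).toFinset := by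
    ext x
    simp [mem_nthRoots (NeZero.pos k), eq_comm]
  rw [heq, Multiset.toFinset_card_of_nodup (hζ.nthRoots_nodup hz), hζ.card_nthRoots,
    if_pos ⟨y, hy⟩]

theorem mul_card_pow_add_card_zero_le [Fintype α] {ζ : K} {k : ℕ} [NeZero k]
    (hζ : IsPrimitiveRoot ζ k) (f : α → K) :
    k * #{b | f b ≠ 0 ∧ ∃ y, y ^ k = f b} + #{b | f b = 0} ≤ ∑ y : K, #{b | f b = y ^ k} := by
  have hcount : ∑ y : K, #{b | f b = y ^ k} = ∑ b, #{y : K | f b = y ^ k} :=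
    (sum_card_bipartiteAbove_eq_sum_card_bipartiteBelow fun b y => f b = y ^ k).symm
  rw [hcount, card_filter, card_filter, mul_sum, ← sum_add_distrib]
  refine sum_le_sum fun b _ => ?_
  by_cases hb : f b = 0
  · have hzero : (0 : K) ∈ ({y | f b = y ^ k} : Finset K) := by simp [hb, NeZero.ne k]
    simpa [hb] using card_pos.mpr ⟨0, hzero⟩
  · by_cases hy : ∃ y, y ^ k = f b
    · obtain ⟨y, hy'⟩ := id hy
      simp [hb, hy, card_filter_pow_eq hζ hb hy']
    · simp [hb, hy]

end Fibers

section Moore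

variable {R : Type*} [CommRing R]

/-- The Moore determinant `det (v i ^ p ^ j)`. In characteristic 2 it is the polarization of
`x ↦ x ^ (1 + 2 + ⋯ + 2 ^ (k - 1))`. -/
def moore (p : ℕ) {k : ℕ} (v : Fin k → R) : R :=
  (Matrix.of fun i j : Fin k => v i ^ p ^ (j : ℕ)).det

theorem moore_vecCons (p : ℕ) [ExpChar R p] {k : ℕ} (a : R) (v : Fin k → R) :
    moore p (Matrix.vecCons a v) = a * moore p (fun i => v i ^ p - a ^ (p - 1) * v i) := by
  have hp : p - 1 + 1 = p := Nat.sub_add_cancel (expChar_pos R p)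
  -- Subtract from each column the multiple of its predecessor that clears the first row.
  set B : Matrix (Fin (k + 1)) (Fin (k + 1)) R := Matrix.of fun i j =>
    Fin.cases (Matrix.vecCons a v i)
      (fun j => (Matrix.vecCons a v i ^ p - a ^ (p - 1) * Matrix.vecCons a v i) ^ p ^ (j : ℕ)) j
  have hdet : moore p (Matrix.vecCons a v) = B.det := by
    refine Matrix.det_eq_of_forall_col_eq_smul_add_pred (fun j => (a ^ (p - 1)) ^ p ^ (j : ℕ))
      (fun i => by simp [B]) fun i j => ?_
    simp only [B, Matrix.of_apply, Fin.cases_succ, Fin.val_succ, Fin.val_castSucc,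
      sub_pow_expChar_pow, mul_pow]
    ring
  have hrow : ∀ j : Fin k, B 0 j.succ = 0 := fun j => by
    simp [B, ← pow_succ, hp, (expChar_pos R p).ne']
  rw [hdet, Matrix.det_succ_row_zero, Fin.sum_univ_succ, sum_eq_zero fun j _ => by rw [hrow]; ring]
  simp [B, moore, Matrix.submatrix]

/-- The map `y ↦ y (y + a)`, which for `a = 1` and in characteristic 2 is the Artin–Schreier map. -/
def artinSchreier (a y : R) : R := y ^ 2 + a * y

variable [CharP R 2]

theorem moore_two_vecCons {k : ℕ} (a : R) (v : Fin k → R) :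
    moore 2 (Matrix.vecCons a v) = a * moore 2 (artinSchreier a ∘ v) := by
  rw [moore_vecCons]
  simp [Function.comp_def, artinSchreier, CharTwo.sub_eq_add]

theorem moore_two_pair (u v : R) : moore 2 ![u, v] = u * v ^ 2 + u ^ 2 * v := by
  simp [moore, Matrix.det_fin_two, CharTwo.sub_eq_add, mul_comm]

theorem moore_two_four (a b c x : R) :
    moore 2 ![a, b, c, x] = a * artinSchreier a b *
      moore 2 ![artinSchreier (artinSchreier a b) (artinSchreier a c),
        artinSchreier (artinSchreier a b) (artinSchreier a x)] := by
  have hcomp : ∀ (f : R → R) {k : ℕ} (u : R) (v : Fin k → R),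
      f ∘ Matrix.vecCons u v = Matrix.vecCons (f u) (f ∘ v) := fun f _ u v =>
    Fin.comp_cons f u v
  simp only [moore_two_vecCons, hcomp, Matrix.empty_eq, mul_assoc]

theorem iterated_fwdDiff_prod_eq_det {G : Type*} [AddCommMonoid G] (φ : Fin 4 → G →+ R)
    (a b c d x : G) :
    fwdDiff d (fwdDiff c (fwdDiff b (fwdDiff a fun y => φ 0 y * φ 1 y * φ 2 y * φ 3 y))) x =
      (Matrix.of fun i j => φ j (![a, b, c, d] i)).det := by
  -- In characteristic 2 the determinant is the permanent, the polarization of a product.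
  simp [Matrix.det_succ_row_zero, Fin.sum_univ_succ, Fin.succAbove, CharTwo.neg_eq, fwdDiff]
  ring

theorem fwdDiff_fwdDiff_cube (a b x : R) :
    fwdDiff b (fwdDiff a fun y => y ^ 3) x = moore 2 ![a, b] := by
  have htwo : (2 : R) = 0 := CharTwo.two_eq_zero
  simp only [fwdDiff, moore_two_pair]
  linear_combination (a * b ^ 2 + a ^ 2 * b + 3 * a * b * x) * htwo

theorem iterated_fwdDiff_pow_fifteen (a b c d x : R) :
    fwdDiff d (fwdDiff c (fwdDiff b (fwdDiff a fun y => y ^ 15))) x = moore 2 ![a, b, c, d] := by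
  have hprod : (fun y : R => y ^ 15) = fun y => y ^ 2 ^ 0 * y ^ 2 ^ 1 * y ^ 2 ^ 2 * y ^ 2 ^ 3 := by
    funext y
    ring
  rw [hprod]
  exact iterated_fwdDiff_prod_eq_det
    (fun j => (iterateFrobenius R 2 (j : ℕ)).toAddMonoidHom) a b c d x

end Moore

section LinearizedMaps

variable {K : Type*} [Field K] [CharP K 2]

theorem artinSchreier_eq_zero_iff {a y : K} : artinSchreier a y = 0 ↔ y = 0 ∨ y = a := by
  rw [artinSchreier, sq, ← add_mul, mul_eq_zero, CharTwo.add_eq_zero, or_comm]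

/-- The trace adjoint of the Artin–Schreier map `artinSchreier a`, up to Frobenius twists,
when `e` is a suitable power of `a`; see `tr_mul_artinSchreier_pow`. -/
def artinSchreierAdjoint (e w : K) : K := w + (e * w) ^ 2

/-- The additive map whose zeros form the radical of the quadratic form `x ↦ tr (m * x ^ 3)`;
see `tr_mul_moore_two_pair`. -/
def cubicRadicalMap (m p : K) : K := m * p + (m * p ^ 2) ^ 2

theorem cubicRadicalMap_injective {m : K} (hm : ¬∃ y, y ^ 3 = m) :
    Function.Injective (cubicRadicalMap m) := by
  have hm0 : m ≠ 0 := fun h => hm ⟨0, by simp [h]⟩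
  intro p r hpr
  have hsub : cubicRadicalMap m (p - r) = 0 := by
    have hlin : cubicRadicalMap m (p - r) = cubicRadicalMap m p - cubicRadicalMap m r := by
      simp only [cubicRadicalMap, sub_pow_char, mul_sub]
      ring
    rw [hlin, hpr, sub_self]
  by_contra hne
  have hd : p - r ≠ 0 := sub_ne_zero.mpr hne
  have hprod : m * (p - r) * (1 + m * (p - r) ^ 3) = 0 := by
    rw [← hsub, cubicRadicalMap]
    ring
  have hone : 1 = m * (p - r) ^ 3 :=
    CharTwo.add_eq_zero.mp ((mul_eq_zero.mp hprod).resolve_left (mul_ne_zero hm0 hd))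
  exact hm ⟨(p - r)⁻¹, by rw [inv_pow, inv_eq_of_mul_eq_one_left hone.symm]⟩

variable [Fintype K] [DecidableEq K]

theorem card_artinSchreier_eq_zero {a : K} (ha : a ≠ 0) : #{y | artinSchreier a y = 0} = 2 := by
  have heq : ({y | artinSchreier a y = 0} : Finset K) = {0, a} := by
    ext y
    simp [artinSchreier_eq_zero_iff]
  rw [heq, card_pair ha.symm]

omit [CharP K 2]

theorem fibersCardLE_artinSchreier (a : K) : FibersCardLE (artinSchreier a) 2 :=
  fibersCardLE_of_eq_eval (P := X ^ 2 + C a * X) (fun y => by simp [artinSchreier])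
    (by compute_degree!) two_pos

theorem fibersCardLE_artinSchreierAdjoint {e : K} (he : e ≠ 0) :
    FibersCardLE (artinSchreierAdjoint e) 2 :=
  fibersCardLE_of_eq_eval (P := X + C (e ^ 2) * X ^ 2)
    (fun w => by simp [artinSchreierAdjoint, mul_pow]) (by compute_degree!) two_pos

theorem fibersCardLE_cubicRadicalMap {m : K} (hm : m ≠ 0) : FibersCardLE (cubicRadicalMap m) 4 :=
  fibersCardLE_of_eq_eval (P := C m * X + C (m ^ 2) * X ^ 4)
    (fun p => by simp [cubicRadicalMap, mul_pow, ← pow_mul]) (by compute_degree!) four_pos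

end LinearizedMaps

section Trace

variable {n : ℕ}

theorem tr_add (x y : Fq n) : tr (x + y) = tr x + tr y := map_add _ x y

theorem tr_sq (x : Fq n) : tr (x ^ 2) = tr x := by
  simpa [tr] using Algebra.trace_eq_of_algEquiv
    (FiniteField.frobeniusAlgEquivOfAlgebraic (ZMod 2) (Fq n)) x

theorem eq_zero_of_forall_tr_mul_pow {w : Fq n} (k : ℕ) (h : ∀ x, tr (w * x ^ 2 ^ k) = 0) :
    w = 0 := by
  refine (traceForm_nondegenerate (ZMod 2) (Fq n)).1 w fun z => ?_
  obtain ⟨x, rfl⟩ := (iterateFrobeniusEquiv (Fq n) 2 k).surjective z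
  simpa [tr, Algebra.traceForm_apply, iterateFrobenius_def] using h x

theorem tr_mul_artinSchreier_pow (w a u : Fq n) (k : ℕ) :
    tr (w * artinSchreier a u ^ 2 ^ k) =
      tr (artinSchreierAdjoint (a ^ 2 ^ k) w * u ^ 2 ^ (k + 1)) := by
  have hexpand : w * artinSchreier a u ^ 2 ^ k =
      w * u ^ 2 ^ (k + 1) + a ^ 2 ^ k * w * u ^ 2 ^ k := by
    rw [artinSchreier, add_pow_char_pow, mul_pow]
    ring
  rw [hexpand, tr_add, ← tr_sq (a ^ 2 ^ k * w * u ^ 2 ^ k), ← tr_add, artinSchreierAdjoint]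
  ring_nf

theorem tr_mul_moore_two_pair (m p u : Fq n) :
    tr (m * moore 2 ![p, u]) = tr (cubicRadicalMap m p * u ^ 2) := by
  rw [moore_two_pair, mul_add, tr_add, ← tr_sq (m * (p ^ 2 * u)), ← tr_add, cubicRadicalMap]
  ring_nf

theorem radical_tr_mul_moore_two {m p : Fq n} (h : ∀ u, tr (m * moore 2 ![p, u]) = 0) :
    cubicRadicalMap m p = 0 :=
  eq_zero_of_forall_tr_mul_pow 1 fun u => by rw [pow_one, ← tr_mul_moore_two_pair, h]

theorem radical_tr_mul_moore_four {c a b e : Fq n}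
    (h : ∀ x, tr (c * moore 2 ![a, b, e, x]) = 0) :
    artinSchreierAdjoint (a ^ 4) (artinSchreierAdjoint (artinSchreier a b ^ 2)
      (cubicRadicalMap (c * (a * artinSchreier a b))
        (artinSchreier (artinSchreier a b) (artinSchreier a e)))) = 0 := by
  refine eq_zero_of_forall_tr_mul_pow 3 fun x => ?_
  have htwo := tr_mul_artinSchreier_pow (artinSchreierAdjoint (artinSchreier a b ^ 2)
    (cubicRadicalMap (c * (a * artinSchreier a b))
      (artinSchreier (artinSchreier a b) (artinSchreier a e)))) a x 2
  have hone := tr_mul_artinSchreier_pow (cubicRadicalMap (c * (a * artinSchreier a b))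
    (artinSchreier (artinSchreier a b) (artinSchreier a e))) (artinSchreier a b)
    (artinSchreier a x) 1
  norm_num only at hone htwo ⊢
  rw [← htwo, ← hone, ← tr_mul_moore_two_pair, mul_assoc, ← moore_two_four, h]

end Trace

section CharSum

/-- The nontrivial character `z ↦ (-1) ^ z` of `𝔽₂`. -/
def signChar : AddChar (ZMod 2) ℝ := AddChar.zmodChar 2 (ζ := -1) (by norm_num)

theorem signChar_of_ne_zero {z : ZMod 2} (hz : z ≠ 0) : signChar z = -1 := by
  have hone : z = 1 := Fin.eq_one_of_ne_zero z hz
  rw [hone, signChar, AddChar.zmodChar_apply, ZMod.val_one, pow_one]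

theorem abs_signChar (z : ZMod 2) : |signChar z| = 1 := by
  simp [signChar, AddChar.zmodChar_apply]

/-- The sum of `(-1) ^ h x` over the domain of the Boolean function `h`, i.e. its Walsh transform
at `0`. -/
def charSum {α : Type*} [Fintype α] (h : α → ZMod 2) : ℝ := ∑ x, signChar (h x)

theorem abs_charSum_le_card {α : Type*} [Fintype α] (h : α → ZMod 2) :
    |charSum h| ≤ Fintype.card α :=
  (abs_sum_le_sum_abs _ _).trans (by simp [abs_signChar])

variable {n : ℕ}

theorem sq_charSum (h : Fq n → ZMod 2) : charSum h ^ 2 = ∑ a, charSum (der h a) := by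
  have hshift : ∀ x, ∑ y, signChar (h x) * signChar (h y) =
      ∑ a, signChar (h x) * signChar (h (x + a)) := fun x =>
    (Equiv.sum_comp (Equiv.addLeft x) fun y => signChar (h x) * signChar (h y)).symm
  simp only [charSum, der, sq, sum_mul_sum, hshift, AddChar.map_add_eq_mul]
  exact sum_comm

theorem charSum_eq_zero_of_der_ne_zero {h : Fq n → ZMod 2} {d : Fq n} (hd : ∀ x, der h d x ≠ 0) :
    charSum h = 0 := by
  have hshift : charSum h = ∑ x, signChar (h (x + d)) :=
    (Equiv.sum_comp (Equiv.addRight d) fun y => signChar (h y)).symm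
  have hneg : ∀ x, signChar (h (x + d)) = -signChar (h x) := fun x => by
    have hx : h (x + d) = h x + der h d x := by
      rw [der, ← add_assoc, CharTwo.add_self_eq_zero, zero_add]
    rw [hx, AddChar.map_add_eq_mul, signChar_of_ne_zero (hd x), mul_neg_one]
  simp only [hneg, sum_neg_distrib] at hshift
  exact self_eq_neg.mp hshift

open scoped Classical in
theorem abs_charSum_le_of_polar {h : Fq n → ZMod 2} {β : Fq n → Fq n → ZMod 2}
    (hβ : ∀ c d x, der (der h c) d x = β c d) {Φ : Fq n → Fq n} {k : ℕ}
    (hrad : ∀ c, (∀ d, β c d = 0) → Φ c = 0) (hΦ : FibersCardLE Φ (k ^ 2)) :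
    |charSum h| ≤ k * √(Fintype.card (Fq n)) := by
  have hvanish : ∀ c, Φ c ≠ 0 → charSum (der h c) = 0 := by
    intro c hc
    obtain ⟨d, hd⟩ := not_forall.mp (mt (hrad c) hc)
    exact charSum_eq_zero_of_der_ne_zero fun x => by rwa [hβ c d x]
  have hsq : charSum h ^ 2 ≤ k ^ 2 * Fintype.card (Fq n) := calc
    charSum h ^ 2 = ∑ c with Φ c = 0, charSum (der h c) := by
      rw [sq_charSum, sum_filter_of_ne fun c _ hne => not_imp_comm.mp (hvanish c) hne]
    _ ≤ #{c | Φ c = 0} • (Fintype.card (Fq n) : ℝ) :=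
      sum_le_card_nsmul _ _ _ fun c _ => (le_abs_self _).trans (abs_charSum_le_card _)
    _ ≤ k ^ 2 * Fintype.card (Fq n) := by
      rw [nsmul_eq_mul]
      gcongr
      exact_mod_cast hΦ 0
  simpa using Real.abs_le_sqrt hsq

open scoped Classical in
theorem card_artinSchreier_eq_le {a : Fq n} (ha : a ≠ 0) (z : Fq n) :
    (#{b | artinSchreier a b = z} : ℝ) ≤ 1 + signChar (tr (z / a ^ 2)) := by
  by_cases hz : tr (z / a ^ 2) = 0
  · rw [hz, AddChar.map_zero_eq_one, one_add_one_eq_two]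
    exact_mod_cast fibersCardLE_artinSchreier a z
  · rw [signChar_of_ne_zero hz, add_neg_cancel]
    have hempty : ∀ b, artinSchreier a b ≠ z := by
      rintro b rfl
      have hdiv : artinSchreier a b / a ^ 2 = (b / a) ^ 2 + b / a := by
        rw [artinSchreier]
        field_simp
      rw [hdiv, tr_add, tr_sq, CharTwo.add_self_eq_zero] at hz
      exact hz rfl
    simp [hempty]

theorem der_tr_mul (c : Fq n) (F : Fq n → Fq n) (a : Fq n) :
    der (fun x => tr (c * F x)) a = fun x => tr (c * fwdDiff a F x) := by
  funext x
  rw [der, ← tr_add, ← mul_add, fwdDiff, CharTwo.sub_eq_add, add_comm]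

theorem der_der_tr_mul_cube (m c d x : Fq n) :
    der (der (fun y => tr (m * y ^ 3)) c) d x = tr (m * moore 2 ![c, d]) := by
  simp only [der_tr_mul, fwdDiff_fwdDiff_cube]

theorem abs_charSum_tr_mul_cube_le {m : Fq n} (hm : m ≠ 0) :
    |charSum fun y => tr (m * y ^ 3)| ≤ 2 * √(Fintype.card (Fq n)) := by
  classical
  exact_mod_cast abs_charSum_le_of_polar (k := 2) (der_der_tr_mul_cube m)
    (fun _ => radical_tr_mul_moore_two) (fibersCardLE_cubicRadicalMap hm)

open scoped Classical in
theorem card_mul_artinSchreier_cube_le {ω : Fq n} (hω : IsPrimitiveRoot ω 3) {m a : Fq n}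
    (hm : m ≠ 0) (ha : a ≠ 0) :
    3 * (#{b | m * artinSchreier a b ≠ 0 ∧ ∃ y, y ^ 3 = m * artinSchreier a b} : ℝ) + 2 ≤
      Fintype.card (Fq n) + 2 * √(Fintype.card (Fq n)) := by
  have hzero : #{b | m * artinSchreier a b = 0} = 2 := by
    simpa [hm] using card_artinSchreier_eq_zero ha
  have hfiber : ∀ y, (#{b | m * artinSchreier a b = y ^ 3} : ℝ) ≤
      1 + signChar (tr ((m * a ^ 2)⁻¹ * y ^ 3)) := by
    intro y
    have heq : ∀ b, m * artinSchreier a b = y ^ 3 ↔ artinSchreier a b = y ^ 3 / m := fun b => by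
      rw [eq_div_iff hm, mul_comm]
    have harg : y ^ 3 / m / a ^ 2 = (m * a ^ 2)⁻¹ * y ^ 3 := by
      field_simp
    rw [← harg]
    simpa only [heq] using card_artinSchreier_eq_le ha (y ^ 3 / m)
  have hcount := mul_card_pow_add_card_zero_le hω fun b => m * artinSchreier a b
  rw [hzero] at hcount
  calc _ ≤ ∑ y, (#{b | m * artinSchreier a b = y ^ 3} : ℝ) := by exact_mod_cast hcount
    _ ≤ ∑ y : Fq n, (1 + signChar (tr ((m * a ^ 2)⁻¹ * y ^ 3))) := sum_le_sum fun y _ => hfiber y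
    _ = Fintype.card (Fq n) + charSum fun y => tr ((m * a ^ 2)⁻¹ * y ^ 3) := by
      simp [sum_add_distrib, charSum]
    _ ≤ _ := by
      gcongr
      exact le_of_abs_le
        (abs_charSum_tr_mul_cube_le (inv_ne_zero (mul_ne_zero hm (pow_ne_zero 2 ha))))

/-- The fourth derivative of `h` is that of `x ↦ tr (c * x ^ 15)`, i.e. the two functions differ by
a function of degree at most 3. -/
def HasMooreDerivative (c : Fq n) (h : Fq n → ZMod 2) : Prop :=
  ∀ a b d e x, der (der (der (der h a) b) d) e x = tr (c * moore 2 ![a, b, d, e])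

theorem der_add (f g : Fq n → ZMod 2) (a : Fq n) : der (f + g) a = der f a + der g a :=
  funext fun _ => add_add_add_comm _ _ _ _

theorem hasMooreDerivative_tr_mul_pow_add (c : Fq n) {g : Fq n → ZMod 2} (hg : degLE g 3) :
    HasMooreDerivative c ((fun x => tr (c * x ^ 15)) + g) := by
  intro a b d e x
  have hzero : der (der (der (der g a) b) d) e x = 0 := congrFun (hg [e, d, b, a] rfl) x
  simp only [der_add, Pi.add_apply, hzero, add_zero, der_tr_mul, iterated_fwdDiff_pow_fifteen]

variable {c : Fq n} {h : Fq n → ZMod 2}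

open scoped Classical in
theorem HasMooreDerivative.abs_charSum_der_der_le (hh : HasMooreDerivative c h) {a b : Fq n}
    (ha : a ≠ 0) (hab : artinSchreier a b ≠ 0) {k : ℕ}
    (hk : FibersCardLE (cubicRadicalMap (c * (a * artinSchreier a b))) (k ^ 2)) :
    |charSum (der (der h a) b)| ≤ 4 * k * √(Fintype.card (Fq n)) := by
  have hfib := (fibersCardLE_artinSchreierAdjoint (pow_ne_zero 4 ha)).comp <|
    (fibersCardLE_artinSchreierAdjoint (pow_ne_zero 2 hab)).comp <| hk.comp <|
      (fibersCardLE_artinSchreier (artinSchreier a b)).comp (fibersCardLE_artinSchreier a)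
  have hcard : 2 * 2 * k ^ 2 * 2 * 2 = (4 * k) ^ 2 := by ring
  rw [hcard] at hfib
  exact_mod_cast abs_charSum_le_of_polar (hh a b) (fun _ => radical_tr_mul_moore_four) hfib

open scoped Classical in
theorem HasMooreDerivative.charSum_der_der_le (hh : HasMooreDerivative c h) {a : Fq n}
    (ha : a ≠ 0) (b : Fq n) :
    charSum (der (der h a) b) ≤ 4 * √(Fintype.card (Fq n)) +
      (if c * a * artinSchreier a b ≠ 0 ∧ ∃ y, y ^ 3 = c * a * artinSchreier a b then
        4 * √(Fintype.card (Fq n)) else 0) +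
      (if c * a * artinSchreier a b = 0 then
        Fintype.card (Fq n) - 4 * √(Fintype.card (Fq n)) else 0) := by
  by_cases hzero : c * a * artinSchreier a b = 0
  · have hle := (le_abs_self _).trans (abs_charSum_le_card (der (der h a) b))
    simpa [hzero] using hle
  have hab : artinSchreier a b ≠ 0 := right_ne_zero_of_mul hzero
  by_cases hcube : ∃ y, y ^ 3 = c * a * artinSchreier a b
  · have hle := le_of_abs_le <| hh.abs_charSum_der_der_le ha hab (k := 2)
      (fibersCardLE_cubicRadicalMap (mul_assoc c a _ ▸ hzero))
    rw [if_pos ⟨hzero, hcube⟩, if_neg hzero]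
    push_cast at hle
    linarith
  · have hle := le_of_abs_le <| hh.abs_charSum_der_der_le ha hab (k := 1)
      (fibersCardLE_one_of_injective (cubicRadicalMap_injective (mul_assoc c a _ ▸ hcube)))
    simpa [hzero, hcube] using hle

theorem HasMooreDerivative.sq_charSum_der_le {ω : Fq n} (hω : IsPrimitiveRoot ω 3)
    (hh : HasMooreDerivative c h) (hc : c ≠ 0) {a : Fq n} (ha : a ≠ 0) :
    charSum (der h a) ^ 2 ≤ 16 / 3 * √(Fintype.card (Fq n)) ^ 3 +
      14 / 3 * √(Fintype.card (Fq n)) ^ 2 - 32 / 3 * √(Fintype.card (Fq n)) := by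
  classical
  set s := √(Fintype.card (Fq n)) with hs
  have hnonneg : 0 ≤ s := Real.sqrt_nonneg _
  have hcard : (Fintype.card (Fq n) : ℝ) = s ^ 2 := (Real.sq_sqrt (Nat.cast_nonneg _)).symm
  have hzero : #{b | c * a * artinSchreier a b = 0} = 2 := by
    simpa [hc, ha] using card_artinSchreier_eq_zero ha
  have hcube := card_mul_artinSchreier_cube_le hω (mul_ne_zero hc ha) ha
  rw [← hs, hcard] at hcube
  set N := #{b | c * a * artinSchreier a b ≠ 0 ∧ ∃ y, y ^ 3 = c * a * artinSchreier a b}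
  calc charSum (der h a) ^ 2 = ∑ b, charSum (der (der h a) b) := sq_charSum _
    _ ≤ s ^ 2 * (4 * s) + N * (4 * s) + 2 * (s ^ 2 - 4 * s) := by
      refine (sum_le_sum fun b _ => hh.charSum_der_der_le ha b).trans_eq ?_
      simp only [sum_add_distrib, ← sum_filter, sum_const, nsmul_eq_mul, hzero, card_univ, hcard,
        Nat.cast_ofNat, Real.sqrt_sq hnonneg, N]
    _ ≤ _ := by nlinarith [mul_le_mul_of_nonneg_left hcube hnonneg]

theorem sq_charSum_le_of_forall_der {M : ℝ} (hM : ∀ a ≠ 0, charSum (der h a) ^ 2 ≤ M) :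
    charSum h ^ 2 ≤ (Fintype.card (Fq n) - 1) * √M + Fintype.card (Fq n) := by
  classical
  rw [sq_charSum, ← sum_erase_add _ _ (mem_univ (0 : Fq n))]
  gcongr
  · refine (sum_le_card_nsmul _ _ √M fun a ha => ?_).trans_eq ?_
    · exact (le_abs_self _).trans (Real.abs_le_sqrt (hM a (ne_of_mem_erase ha)))
    · rw [nsmul_eq_mul, card_erase_of_mem (mem_univ _), card_univ,
        Nat.cast_sub Fintype.card_pos, Nat.cast_one]
  · exact (le_abs_self _).trans (abs_charSum_le_card _)

end CharSum

section Nonlinearity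

variable {n r : ℕ}

theorem charSum_add_eq (f g : Fq n → ZMod 2) :
    charSum (f + g) = Fintype.card (Fq n) - 2 * hdist f g := by
  classical
  have hsign : ∀ x, signChar ((f + g) x) = 1 - if f x ≠ g x then 2 else 0 := by
    intro x
    by_cases hx : f x = g x
    · simp [hx, CharTwo.add_self_eq_zero]
    · have hne : f x + g x ≠ 0 := fun h => hx (CharTwo.add_eq_zero.mp h)
      rw [Pi.add_apply, signChar_of_ne_zero hne, if_pos hx]
      norm_num
  simp only [charSum, hsign, hdist, sum_sub_distrib, ← sum_filter, sum_const, nsmul_eq_mul,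
    Set.ncard_eq_toFinset_card', Set.toFinset_ofPred, card_univ]
  ring

theorem degLE_zero : degLE (0 : Fq n → ZMod 2) r := by
  have hder : ∀ l : List (Fq n), derIter (0 : Fq n → ZMod 2) l = 0 := fun l => by
    induction l with
    | nil => rfl
    | cons a l ih => simp [derIter, ih, der, funext_iff]
  exact fun l _ => hder l

theorem exists_degLE_nl_eq_hdist (f : Fq n → ZMod 2) : ∃ g, degLE g r ∧ nl r f = hdist f g :=
  Nat.sInf_mem (s := {d | ∃ g, degLE g r ∧ d = hdist f g}) ⟨_, 0, degLE_zero, rfl⟩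

theorem le_nl_of_sq_charSum_le {f : Fq n → ZMod 2} {M : ℝ}
    (hM : ∀ g, degLE g r → charSum (f + g) ^ 2 ≤ M) :
    Fintype.card (Fq n) / 2 - 1 / 2 * √M ≤ nl r f := by
  obtain ⟨g, hg, hnl⟩ := exists_degLE_nl_eq_hdist (r := r) f
  have hle := (le_abs_self _).trans (Real.abs_le_sqrt (hM g hg))
  rw [charSum_add_eq] at hle
  rw [hnl]
  linarith

theorem card_Fq (hn : n ≠ 0) : Fintype.card (Fq n) = 2 ^ n := by
  rw [Fintype.card_eq_nat_card, GaloisField.card 2 n hn]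

theorem exists_isPrimitiveRoot_three (hn : n ≠ 0) (hev : Even n) :
    ∃ ω : Fq n, IsPrimitiveRoot ω 3 := by
  classical
  obtain ⟨k, rfl⟩ := hev
  have hdvd : 3 ∣ Fintype.card (Fq (k + k))ˣ := by
    rw [Fintype.card_units, card_Fq hn, ← two_mul, pow_mul]
    simpa using Nat.sub_dvd_pow_sub_pow 4 1 k
  obtain ⟨u, hu⟩ := exists_prime_orderOf_dvd_card 3 hdvd
  exact ⟨u, IsPrimitiveRoot.coe_units_iff.mpr (hu ▸ IsPrimitiveRoot.orderOf u)⟩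

theorem two_rpow_bound_eq_cubic_sqrt (t : ℝ) :
    (1 / 3) * (2 : ℝ) ^ (3 * t / 2 + 4) + (7 / 3) * 2 ^ (t + 1) - (1 / 3) * 2 ^ (t / 2 + 5) =
      16 / 3 * √(2 ^ t) ^ 3 + 14 / 3 * √(2 ^ t) ^ 2 - 32 / 3 * √(2 ^ t) := by
  have hsqrt : √((2 : ℝ) ^ t) = 2 ^ (t / 2) := by
    rw [Real.sqrt_eq_rpow, ← Real.rpow_mul zero_le_two, mul_one_div]
  have hpow : ∀ k : ℕ, √((2 : ℝ) ^ t) ^ k = 2 ^ (t / 2 * k) := fun k => by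
    rw [hsqrt, Real.rpow_mul_natCast zero_le_two]
  have hcube : (2 : ℝ) ^ (3 * t / 2 + 4) = 16 * √(2 ^ t) ^ 3 := by
    have hexp : 3 * t / 2 = t / 2 * (3 : ℕ) := by
      push_cast
      ring
    rw [hexp, Real.rpow_add two_pos, ← hpow, mul_comm]
    norm_num
  have hsq : (2 : ℝ) ^ (t + 1) = 2 * √(2 ^ t) ^ 2 := by
    rw [Real.rpow_add_one two_ne_zero, Real.sq_sqrt (by positivity), mul_comm]
  have hlin : (2 : ℝ) ^ (t / 2 + 5) = 32 * √(2 ^ t) := by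
    rw [Real.rpow_add two_pos, hsqrt, mul_comm]
    norm_num
  rw [hcube, hsq, hlin]
  ring

theorem third_order_nl_tr_x15_even_general (n : ℕ) (hn : n ≠ 0) (hev : Even n) {c : Fq n}
    (hc : c ≠ 0) (f : Fq n → ZMod 2) (hf : ∀ x, f x = tr (c * x ^ 15)) :
    (nl 3 f : ℝ) ≥ (2:ℝ) ^ ((n:ℝ) - 1) - (1/2) * Real.sqrt
      (((2:ℝ) ^ (n:ℝ) - 1) * Real.sqrt
        ((1/3) * (2:ℝ) ^ (3 * (n:ℝ) / 2 + 4) + (7/3) * (2:ℝ) ^ ((n:ℝ) + 1)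
          - (1/3) * (2:ℝ) ^ ((n:ℝ) / 2 + 5)) + (2:ℝ) ^ (n:ℝ)) := by
  obtain rfl : f = fun x => tr (c * x ^ 15) := funext hf
  obtain ⟨ω, hω⟩ := exists_isPrimitiveRoot_three hn hev
  have hcard : (Fintype.card (Fq n) : ℝ) = 2 ^ (n : ℝ) := by
    rw [card_Fq hn, Real.rpow_natCast, Nat.cast_pow, Nat.cast_ofNat]
  rw [two_rpow_bound_eq_cubic_sqrt, Real.rpow_sub_one two_ne_zero, ← hcard]
  exact le_nl_of_sq_charSum_le fun g hg => sq_charSum_le_of_forall_der fun a ha =>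
    (hasMooreDerivative_tr_mul_pow_add c hg).sq_charSum_der_le hω hc ha

end Nonlinearity

end

/-- Third-order nonlinearity lower bound for `tr(x^15)`, even `n ≥ 6`. -/
theorem third_order_nl_tr_x15_even (n : ℕ) (hn : 6 ≤ n) (hev : Even n)
    (f : Fq n → ZMod 2) (hf : ∀ x, f x = tr (x ^ 15)) :
    (nl 3 f : ℝ) ≥ (2:ℝ) ^ ((n:ℝ) - 1) - (1/2) * Real.sqrt
      (((2:ℝ) ^ (n:ℝ) - 1) * Real.sqrt
        ((1/3) * (2:ℝ) ^ (3 * (n:ℝ) / 2 + 4) + (7/3) * (2:ℝ) ^ ((n:ℝ) + 1)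
          - (1/3) * (2:ℝ) ^ ((n:ℝ) / 2 + 5)) + (2:ℝ) ^ (n:ℝ)) := by
  exact third_order_nl_tr_x15_even_general n (by omega) hev one_ne_zero f (by simpa using hf)
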